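/- arXiv:2601.12843 — 2 statements merged into one kernel-verified Lean document; each statement's English description precedes it below -/
import Mathlib

section
/- For real k and z > 0, the function f(z,k) = z^{-1/2} K_{ik}(z²/2) satisfies the integral eigenvalue equation ∫_0^∞ G(z,w) f(w,k) dw = (π/cosh(πk)) f(z,k), where G(z,w) = 2 (zw)^{1/2} e^{-(z²+w²)/2}/(z²+w²). -/
open Real MeasureTheory

/-- The modified Bessel function of the second kind of purely imaginary order `ik`:
`K_{ik}(x) = ∫_0^∞ e^{-x cosh t} cos(k t) dt` (real-valued for real `k`, `x > 0`). -/
noncomputable def besselKim (k x : ℝ) : ℝ :=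
  ∫ t in Set.Ioi (0 : ℝ), Real.exp (-x * Real.cosh t) * Real.cos (k * t)

/-!
The functions `exp (±x) K_{ik}(x)` are the cosine transforms, at frequency `2k`, of
`exp (-2x sinh² a)` and `exp (-2x cosh² b)`. By scaling, the integral of
`exp (-c² w²) / (z² + w²)` over `w` is, up to the factor `1 / z`, the integral of `exp (-z² u²)`
against the Stieltjes kernel `c / (c² + u²)`. In the coordinates `u = sinh a`, `c = cosh b` this
kernel becomes, with the Jacobian `cosh a`, the even part in `a` of `1 / cosh (b - a)`. Hence the
integral operator acts as convolution with `1 / cosh`, which multiplies cosine transforms by the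
transform of `1 / cosh`, a value of the reflection formula for the Gamma function.
-/

lemma betaIntegral_eq_integral_sigmoid (u v : ℂ) :
    Complex.betaIntegral u v = ∫ t : ℝ, (sigmoid t : ℂ) ^ u * (sigmoid (-t) : ℂ) ^ v := by
  rw [Complex.betaIntegral, intervalIntegral.integral_of_le zero_le_one,
    integral_Ioc_eq_integral_Ioo, ← range_sigmoid, ← Set.image_univ,
    integral_image_eq_integral_abs_deriv_smul MeasurableSet.univ
      (fun t _ ↦ (hasDerivAt_sigmoid t).hasDerivWithinAt) sigmoid_injective.injOn,
    Measure.restrict_univ]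
  congr 1 with t
  have hpos : (sigmoid t : ℂ) ≠ 0 := mod_cast (sigmoid_pos t).ne'
  have hneg : (sigmoid (-t) : ℂ) ≠ 0 := mod_cast (sigmoid_pos (-t)).ne'
  rw [← sigmoid_neg, abs_of_pos (mul_pos (sigmoid_pos t) (sigmoid_pos (-t))),
    ← Complex.ofReal_one, ← Complex.ofReal_sub, ← sigmoid_neg, Complex.ofReal_one,
    Complex.cpow_sub _ _ hpos, Complex.cpow_sub _ _ hneg, Complex.cpow_one, Complex.cpow_one,
    Complex.real_smul, Complex.ofReal_mul]
  field_simp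

lemma sigmoid_cpow (t : ℝ) (s : ℂ) :
    (sigmoid t : ℂ) ^ s = Complex.exp (s * t) * (sigmoid (-t) : ℂ) ^ s := by
  have hexp : sigmoid t = exp t * sigmoid (-t) := by
    rw [← sigmoid_mul_rexp_neg, mul_left_comm, ← exp_add, add_neg_cancel, exp_zero, mul_one]
  rw [hexp, Complex.ofReal_mul,
    Complex.mul_cpow_ofReal_nonneg (exp_pos t).le (sigmoid_pos (-t)).le,
    Complex.cpow_def_of_ne_zero (mod_cast (exp_pos t).ne'), ← Complex.ofReal_log (exp_pos t).le,
    log_exp, mul_comm (t : ℂ)]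

lemma integral_cexp_mul_sigmoid_neg {s : ℂ} (hs₀ : 0 < s.re) (hs₁ : s.re < 1) :
    ∫ t : ℝ, Complex.exp (s * t) * sigmoid (-t) = π / Complex.sin (π * s) := by
  have hbeta : Complex.betaIntegral s (1 - s) = π / Complex.sin (π * s) := by
    have hreflection :=
      Complex.Gamma_mul_Gamma_eq_betaIntegral hs₀ (t := 1 - s) (by simpa using hs₁)
    rwa [add_sub_cancel, Complex.Gamma_one, one_mul, Complex.Gamma_mul_Gamma_one_sub,
      eq_comm] at hreflection
  rw [← hbeta, betaIntegral_eq_integral_sigmoid]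
  congr 1 with t
  have hneg : (sigmoid (-t) : ℂ) ≠ 0 := mod_cast (sigmoid_pos (-t)).ne'
  rw [sigmoid_cpow, mul_assoc, ← Complex.cpow_add _ _ hneg, add_sub_cancel, Complex.cpow_one]

lemma exp_mul_sigmoid_neg_two_mul (a : ℝ) : exp a * sigmoid (-(2 * a)) = (cosh a)⁻¹ / 2 := by
  have hexp : exp (2 * a) = exp a * exp a := by rw [two_mul, exp_add]
  rw [sigmoid_def, neg_neg, cosh_eq, exp_neg, hexp]
  field

lemma integral_cexp_mul_inv_cosh {s : ℂ} (hs : |s.re| < 1) :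
    ∫ a : ℝ, Complex.exp (s * a) * ((cosh a)⁻¹ : ℝ) = π / Complex.cos (π * s / 2) := by
  obtain ⟨hlower, hupper⟩ := abs_lt.1 hs
  have hre : ((1 + s) / 2).re = (1 + s.re) / 2 := by simp
  have htransform := integral_cexp_mul_sigmoid_neg (s := (1 + s) / 2) (by rw [hre]; linarith)
    (by rw [hre]; linarith)
  have hscale := Measure.integral_comp_mul_left
    (fun t : ℝ ↦ Complex.exp ((1 + s) / 2 * t) * sigmoid (-t)) 2
  have hpoint (a : ℝ) : Complex.exp (s * a) * ((cosh a)⁻¹ : ℝ) =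
      2 * (Complex.exp ((1 + s) / 2 * (2 * a : ℝ)) * sigmoid (-(2 * a))) := by
    have hinv : (((cosh a)⁻¹ : ℝ) : ℂ) = 2 * (Complex.exp a * sigmoid (-(2 * a))) := by
      have := exp_mul_sigmoid_neg_two_mul a
      rw [← Complex.ofReal_exp]
      exact mod_cast (by linarith : (cosh a)⁻¹ = 2 * (exp a * sigmoid (-(2 * a))))
    have hexponent : (1 + s) / 2 * (2 * a : ℝ) = s * a + a := by push_cast; ring
    rw [hinv, hexponent, Complex.exp_add]
    ring
  have hsin : Complex.sin (π * ((1 + s) / 2)) = Complex.cos (π * s / 2) := by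
    rw [← Complex.sin_add_pi_div_two]
    congr 1
    ring
  simp_rw [hpoint]
  rw [integral_const_mul, hscale, htransform, hsin, abs_of_pos (by norm_num), Complex.real_smul]
  push_cast
  ring

lemma integral_cos_mul_inv_cosh (ω : ℝ) :
    ∫ a, cos (ω * a) * (cosh a)⁻¹ = π / cosh (π * ω / 2) := by
  have hvalue : ∫ a : ℝ, Complex.exp (ω * Complex.I * a) * ((cosh a)⁻¹ : ℝ) =
      (π / cosh (π * ω / 2) : ℝ) := by
    rw [integral_cexp_mul_inv_cosh (by simp),
      show π * (ω * Complex.I) / 2 = (π * ω / 2 : ℂ) * Complex.I by ring, Complex.cos_mul_I]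
    push_cast
    rfl
  -- A nonzero Bochner integral certifies integrability.
  have hint : Integrable fun a : ℝ ↦ Complex.exp (ω * Complex.I * a) * ((cosh a)⁻¹ : ℝ) := by
    refine .of_integral_ne_zero ?_
    rw [hvalue]
    exact mod_cast (div_pos pi_pos (cosh_pos _)).ne'
  rw [← Complex.ofReal_re (π / cosh (π * ω / 2)), ← hvalue]
  refine Eq.trans (integral_congr_ae (.of_forall fun a ↦ ?_)) (integral_re hint)
  rw [RCLike.re_eq_complex_re, Complex.re_mul_ofReal, mul_right_comm, ← Complex.ofReal_mul,
    Complex.exp_ofReal_mul_I_re]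

lemma integrable_inv_cosh : Integrable fun a ↦ (cosh a)⁻¹ := by
  refine .of_integral_ne_zero ?_
  have h := integral_cos_mul_inv_cosh 0
  simp only [zero_mul, cos_zero, one_mul, mul_zero, zero_div, cosh_zero, div_one] at h
  rw [h]
  exact pi_ne_zero

lemma integrable_cos_mul {f : ℝ → ℝ} (hf : Integrable f) (ω : ℝ) :
    Integrable fun a ↦ cos (ω * a) * f a :=
  hf.bdd_mul (by fun_prop) (.of_forall fun _ ↦ abs_cos_le_one _)

lemma integrable_sin_mul {f : ℝ → ℝ} (hf : Integrable f) (ω : ℝ) :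
    Integrable fun a ↦ sin (ω * a) * f a :=
  hf.bdd_mul (by fun_prop) (.of_forall fun _ ↦ abs_sin_le_one _)

lemma integral_eq_zero_of_odd {G E : Type*} [MeasurableSpace G] [AddGroup G] [MeasurableNeg G]
    {μ : Measure G} [μ.IsNegInvariant] [NormedAddCommGroup E] [NormedSpace ℝ E] {f : G → E}
    (hf : f.Odd) : ∫ x, f x ∂μ = 0 := by
  have h := integral_neg_eq_self f μ
  simp only [hf _, integral_neg] at h
  have : IsAddTorsionFree E := .of_isTorsionFree ℝ E
  exact neg_eq_self.1 h

lemma integral_cos_mul_comp_sub {g : ℝ → ℝ} (hg : Integrable g) (hg_even : g.Even) (ω a : ℝ) :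
    ∫ b, cos (ω * b) * g (b - a) = cos (ω * a) * ∫ b, cos (ω * b) * g b := by
  have hsin : ∫ b, sin (ω * b) * g b = 0 :=
    integral_eq_zero_of_odd fun b ↦ by rw [mul_neg, sin_neg, hg_even, neg_mul]
  calc ∫ b, cos (ω * b) * g (b - a)
      = ∫ b, cos (ω * (b + a)) * g b := by
        rw [← integral_add_right_eq_self _ a]
        simp only [add_sub_cancel_right]
    _ = ∫ b, (cos (ω * a) * (cos (ω * b) * g b) - sin (ω * a) * (sin (ω * b) * g b)) := by
        congr 1 with b
        rw [mul_add, cos_add]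
        ring
    _ = cos (ω * a) * ∫ b, cos (ω * b) * g b := by
        rw [integral_sub ((integrable_cos_mul hg ω).const_mul _)
          ((integrable_sin_mul hg ω).const_mul _), integral_const_mul, integral_const_mul, hsin,
          mul_zero, sub_zero]

lemma integral_cos_mul_convolution {f g : ℝ → ℝ} (hf : Integrable f) (hg : Integrable g)
    (hg_even : g.Even) (ω : ℝ) :
    ∫ b, cos (ω * b) * ∫ a, f a * g (b - a) =
      (∫ a, cos (ω * a) * f a) * ∫ b, cos (ω * b) * g b := by
  have hint : Integrable (fun p : ℝ × ℝ ↦ cos (ω * p.1) * (f p.2 * g (p.1 - p.2)))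
      (volume.prod volume) :=
    (hf.convolution_integrand (ContinuousLinearMap.mul ℝ ℝ) hg).bdd_mul (by fun_prop)
      (.of_forall fun _ ↦ abs_cos_le_one _)
  calc ∫ b, cos (ω * b) * ∫ a, f a * g (b - a)
      = ∫ b, ∫ a, cos (ω * b) * (f a * g (b - a)) := by simp_rw [integral_const_mul]
    _ = ∫ a, ∫ b, cos (ω * b) * (f a * g (b - a)) := integral_integral_swap hint
    _ = ∫ a, f a * ∫ b, cos (ω * b) * g (b - a) := by
        simp_rw [mul_left_comm (cos _), integral_const_mul]
    _ = (∫ a, cos (ω * a) * f a) * ∫ b, cos (ω * b) * g b := by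
        simp_rw [integral_cos_mul_comp_sub hg hg_even, ← integral_mul_const]
        congr 1 with a
        ring

lemma cosh_add_mul_cosh_sub (a b : ℝ) :
    cosh (b + a) * cosh (b - a) = cosh b ^ 2 + sinh a ^ 2 := by
  rw [cosh_add, cosh_sub]
  linear_combination cosh b ^ 2 * cosh_sq a + sinh a ^ 2 * cosh_sq b

lemma inv_cosh_sub_add_inv_cosh_add (a b : ℝ) :
    (cosh (b - a))⁻¹ + (cosh (b + a))⁻¹ =
      2 * (cosh a * (cosh b / (cosh b ^ 2 + sinh a ^ 2))) := by
  have hsum : cosh (b - a) + cosh (b + a) = 2 * (cosh a * cosh b) := by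
    rw [cosh_add, cosh_sub]
    ring
  rw [inv_add_inv (cosh_pos _).ne' (cosh_pos _).ne', hsum, mul_comm (cosh (b - a)),
    cosh_add_mul_cosh_sub]
  ring

lemma integral_even_mul_cosh_mul_cosh_div {f : ℝ → ℝ} (hf : Integrable f) (hf_even : f.Even)
    (b : ℝ) :
    ∫ a, f a * (cosh a * (cosh b / (cosh b ^ 2 + sinh a ^ 2))) = ∫ a, f a * (cosh (b - a))⁻¹ := by
  have hint : Integrable fun a ↦ f a * (cosh (b - a))⁻¹ := by
    refine hf.mul_bdd (c := 1) (by fun_prop) (.of_forall fun a ↦ ?_)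
    rw [norm_inv, norm_of_nonneg (cosh_pos _).le]
    exact inv_le_one_of_one_le₀ (one_le_cosh _)
  have hreflect := integral_neg_eq_self (fun a ↦ f a * (cosh (b - a))⁻¹) volume
  calc ∫ a, f a * (cosh a * (cosh b / (cosh b ^ 2 + sinh a ^ 2)))
      = ∫ a, (f a * (cosh (b - a))⁻¹ + f (-a) * (cosh (b - -a))⁻¹) / 2 := by
        congr 1 with a
        rw [hf_even, sub_neg_eq_add]
        linear_combination -f a / 2 * inv_cosh_sub_add_inv_cosh_add a b
    _ = ∫ a, f a * (cosh (b - a))⁻¹ := by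
        rw [integral_div, integral_add hint hint.comp_neg, hreflect, add_self_div_two]

lemma integral_cosh_smul_comp_sinh {E : Type*} [NormedAddCommGroup E] [NormedSpace ℝ E]
    (g : ℝ → E) : ∫ a, cosh a • g (sinh a) = ∫ u, g u := by
  have h := integral_image_eq_integral_abs_deriv_smul MeasurableSet.univ
    (fun a _ ↦ (hasDerivAt_sinh a).hasDerivWithinAt) sinh_injective.injOn g
  simpa only [Set.image_univ, sinh_surjective.range_eq, Measure.restrict_univ,
    abs_of_pos (cosh_pos _)] using h.symm

lemma mul_integral_gaussian_div_sq_add_sq {z c : ℝ} (hz : 0 < z) (hc : 0 < c) :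
    z * ∫ w, exp (-(c ^ 2) * w ^ 2) / (z ^ 2 + w ^ 2) =
      c * ∫ u, exp (-(z ^ 2) * u ^ 2) / (c ^ 2 + u ^ 2) := by
  have hscale := Measure.integral_comp_mul_left
    (fun w ↦ exp (-(c ^ 2) * w ^ 2) / (z ^ 2 + w ^ 2)) (z / c)
  have hpoint (u : ℝ) : exp (-(c ^ 2) * (z / c * u) ^ 2) / (z ^ 2 + (z / c * u) ^ 2) =
      c ^ 2 / z ^ 2 * (exp (-(z ^ 2) * u ^ 2) / (c ^ 2 + u ^ 2)) := by
    have hexponent : -(c ^ 2) * (z / c * u) ^ 2 = -(z ^ 2) * u ^ 2 := by field_simp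
    have hdenom : z ^ 2 + (z / c * u) ^ 2 = z ^ 2 / c ^ 2 * (c ^ 2 + u ^ 2) := by field_simp
    rw [hexponent, hdenom]
    field_simp
  simp_rw [hpoint] at hscale
  rw [integral_const_mul, smul_eq_mul, abs_of_pos (by positivity)] at hscale
  set I := ∫ w, exp (-(c ^ 2) * w ^ 2) / (z ^ 2 + w ^ 2)
  set J := ∫ u, exp (-(z ^ 2) * u ^ 2) / (c ^ 2 + u ^ 2)
  calc z * I = z ^ 2 / c * ((z / c)⁻¹ * I) := by field_simp
    _ = z ^ 2 / c * (c ^ 2 / z ^ 2 * J) := by rw [hscale]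
    _ = c * J := by field_simp

lemma sq_le_sinh_sq (a : ℝ) : a ^ 2 ≤ sinh a ^ 2 := by
  rw [sq_le_sq, abs_sinh, self_le_sinh_iff]
  exact abs_nonneg a

lemma integrable_exp_neg_mul_sinh_sq {p : ℝ} (hp : 0 < p) :
    Integrable fun a ↦ exp (-p * sinh a ^ 2) := by
  refine (integrable_exp_neg_mul_sq hp).mono' (by fun_prop) (.of_forall fun a ↦ ?_)
  rw [norm_of_nonneg (exp_pos _).le, exp_le_exp]
  nlinarith [sq_le_sinh_sq a]

lemma integral_gaussian_cosh_div {z : ℝ} (hz : 0 < z) (b : ℝ) :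
    ∫ w, exp (-(cosh b ^ 2) * w ^ 2) / (z ^ 2 + w ^ 2) =
      z⁻¹ * ∫ a, exp (-(z ^ 2) * sinh a ^ 2) * (cosh (b - a))⁻¹ := by
  rw [eq_inv_mul_iff_mul_eq₀ hz.ne', mul_integral_gaussian_div_sq_add_sq hz (cosh_pos b),
    ← integral_cosh_smul_comp_sinh, ← integral_const_mul, ← integral_even_mul_cosh_mul_cosh_div
      (integrable_exp_neg_mul_sinh_sq (by positivity)) (fun a ↦ by rw [sinh_neg, neg_sq])]
  congr 1 with a
  rw [smul_eq_mul]
  ring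

lemma integrable_gaussian_cosh_div {z : ℝ} (hz : 0 < z) :
    Integrable (fun p : ℝ × ℝ ↦ exp (-(cosh p.2 ^ 2) * p.1 ^ 2) / (z ^ 2 + p.1 ^ 2))
      (volume.prod volume) := by
  have hcont : Continuous fun p : ℝ × ℝ ↦
      exp (-(cosh p.2 ^ 2) * p.1 ^ 2) / (z ^ 2 + p.1 ^ 2) :=
    .div (by fun_prop) (by fun_prop) fun p ↦ by positivity
  refine (integrable_prod_iff' hcont.aestronglyMeasurable).2 ⟨.of_forall fun b ↦ ?_, ?_⟩
  · have hc : 0 < cosh b ^ 2 := pow_pos (cosh_pos b) 2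
    refine ((integrable_exp_neg_mul_sq hc).div_const (z ^ 2)).mono'
      (hcont.comp (Continuous.prodMk_left b)).aestronglyMeasurable (.of_forall fun w ↦ ?_)
    rw [norm_of_nonneg (by positivity)]
    gcongr
    exact le_add_of_nonneg_right (sq_nonneg w)
  · have hnorm (b w : ℝ) : ‖exp (-(cosh b ^ 2) * w ^ 2) / (z ^ 2 + w ^ 2)‖ =
        exp (-(cosh b ^ 2) * w ^ 2) / (z ^ 2 + w ^ 2) := norm_of_nonneg (by positivity)
    simp only [hnorm, integral_gaussian_cosh_div hz]
    exact ((integrable_exp_neg_mul_sinh_sq (by positivity)).integrable_convolution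
      (ContinuousLinearMap.mul ℝ ℝ) integrable_inv_cosh).const_mul _

lemma integral_eq_two_mul_integral_Ioi_of_even {f : ℝ → ℝ} (hf : f.Even) :
    ∫ x, f x = 2 * ∫ x in Set.Ioi 0, f x := by
  rw [← integral_comp_abs]
  congr 1 with x
  rcases abs_choice x with h | h <;> rw [h]
  exact (hf x).symm

lemma besselKim_eq_integral_cosh_two_mul (k x : ℝ) :
    besselKim k x = ∫ a, cos (2 * k * a) * exp (-x * cosh (2 * a)) := by
  have heven : (fun t ↦ exp (-x * cosh t) * cos (k * t)).Even := fun t ↦ by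
    simp only [cosh_neg, mul_neg, cos_neg]
  have hscale := Measure.integral_comp_mul_left (fun t ↦ exp (-x * cosh t) * cos (k * t)) 2
  rw [integral_eq_two_mul_integral_Ioi_of_even heven, ← besselKim, smul_eq_mul,
    abs_of_pos (by norm_num), inv_mul_cancel_left₀ two_ne_zero] at hscale
  rw [← hscale]
  congr 1 with a
  rw [mul_comm, ← mul_assoc, mul_comm k]

lemma exp_mul_besselKim (k x : ℝ) :
    exp x * besselKim k x = ∫ a, cos (2 * k * a) * exp (-(2 * x) * sinh a ^ 2) := by
  rw [besselKim_eq_integral_cosh_two_mul, ← integral_const_mul]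
  congr 1 with a
  rw [mul_left_comm, ← exp_add, cosh_two_mul, cosh_sq]
  ring_nf

lemma exp_neg_mul_besselKim (k x : ℝ) :
    exp (-x) * besselKim k x = ∫ b, cos (2 * k * b) * exp (-(2 * x) * cosh b ^ 2) := by
  rw [besselKim_eq_integral_cosh_two_mul, ← integral_const_mul]
  congr 1 with b
  rw [mul_left_comm, ← exp_add, cosh_two_mul, sinh_sq]
  ring_nf

lemma integral_exp_neg_mul_besselKim_div (k : ℝ) {z : ℝ} (hz : 0 < z) :
    ∫ w, exp (-(w ^ 2 / 2)) * besselKim k (w ^ 2 / 2) / (z ^ 2 + w ^ 2) =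
      z⁻¹ * (π / cosh (π * k)) * (exp (z ^ 2 / 2) * besselKim k (z ^ 2 / 2)) := by
  have hint : Integrable (fun p : ℝ × ℝ ↦ cos (2 * k * p.2) *
      (exp (-(cosh p.2 ^ 2) * p.1 ^ 2) / (z ^ 2 + p.1 ^ 2))) (volume.prod volume) :=
    (integrable_gaussian_cosh_div hz).bdd_mul (by fun_prop) (.of_forall fun _ ↦ abs_cos_le_one _)
  calc ∫ w, exp (-(w ^ 2 / 2)) * besselKim k (w ^ 2 / 2) / (z ^ 2 + w ^ 2)
      = ∫ w, ∫ b, cos (2 * k * b) * (exp (-(cosh b ^ 2) * w ^ 2) / (z ^ 2 + w ^ 2)) := by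
        simp_rw [exp_neg_mul_besselKim, ← integral_div]
        congr 1 with w
        congr 1 with b
        rw [mul_div_cancel₀ _ two_ne_zero, mul_div_assoc, neg_mul_comm, mul_neg, mul_comm (w ^ 2),
          neg_mul]
    _ = ∫ b, ∫ w, cos (2 * k * b) * (exp (-(cosh b ^ 2) * w ^ 2) / (z ^ 2 + w ^ 2)) :=
        integral_integral_swap hint
    _ = z⁻¹ * ∫ b, cos (2 * k * b) *
          ∫ a, exp (-(z ^ 2) * sinh a ^ 2) * (cosh (b - a))⁻¹ := by
        simp_rw [integral_const_mul, integral_gaussian_cosh_div hz, mul_left_comm (cos _),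
          integral_const_mul]
    _ = z⁻¹ * (π / cosh (π * k)) * (exp (z ^ 2 / 2) * besselKim k (z ^ 2 / 2)) := by
        rw [integral_cos_mul_convolution (integrable_exp_neg_mul_sinh_sq (by positivity))
          integrable_inv_cosh (fun a ↦ by rw [cosh_neg]), integral_cos_mul_inv_cosh,
          exp_mul_besselKim, mul_div_cancel₀ (z ^ 2) two_ne_zero,
          show π * (2 * k) / 2 = π * k by ring]
        ring

lemma integral_Ioi_exp_neg_mul_besselKim_div (k : ℝ) {z : ℝ} (hz : 0 < z) :
    ∫ w in Set.Ioi 0, exp (-(w ^ 2 / 2)) * besselKim k (w ^ 2 / 2) / (z ^ 2 + w ^ 2) =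
      (2 * z)⁻¹ * (π / cosh (π * k)) * (exp (z ^ 2 / 2) * besselKim k (z ^ 2 / 2)) := by
  have hline := integral_exp_neg_mul_besselKim_div k hz
  rw [integral_eq_two_mul_integral_Ioi_of_even fun w ↦ by simp only [neg_sq]] at hline
  rw [mul_inv]
  linear_combination hline / 2

lemma kernel_mul_rpow_mul {z w : ℝ} (hz : 0 < z) (hw : 0 < w) (K : ℝ) :
    (2 * (z * w) ^ ((1 : ℝ) / 2) * exp (-(z ^ 2 + w ^ 2) / 2) / (z ^ 2 + w ^ 2)) *
        (w ^ (-(1 : ℝ) / 2) * K) =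
      2 * z ^ ((1 : ℝ) / 2) * exp (-(z ^ 2 / 2)) *
        (exp (-(w ^ 2 / 2)) * K / (z ^ 2 + w ^ 2)) := by
  have hpow : w ^ ((1 : ℝ) / 2) * w ^ (-(1 : ℝ) / 2) = 1 := by
    rw [← rpow_add hw, neg_div, add_neg_cancel, rpow_zero]
  rw [mul_rpow hz.le hw.le, neg_div, add_div, neg_add, exp_add]
  linear_combination (2 * z ^ ((1 : ℝ) / 2) * exp (-(z ^ 2 / 2)) *
    (exp (-(w ^ 2 / 2)) * K / (z ^ 2 + w ^ 2))) * hpow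

/-- `f(z,k) = z^{-1/2} K_{ik}(z²/2)` is an eigenfunction of the integral
operator with kernel `G(z,w) = 2(zw)^{1/2} e^{-(z²+w²)/2}/(z²+w²)`, with eigenvalue
`π / cosh(πk)`. -/
theorem kernel_eigenfunction (k z : ℝ) (hz : 0 < z) :
    (∫ w in Set.Ioi (0 : ℝ),
        (2 * (z * w) ^ ((1 : ℝ) / 2) * Real.exp (-(z ^ 2 + w ^ 2) / 2) / (z ^ 2 + w ^ 2)) *
          (w ^ (-(1 : ℝ) / 2) * besselKim k (w ^ 2 / 2)))
      = Real.pi / Real.cosh (Real.pi * k) *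
          (z ^ (-(1 : ℝ) / 2) * besselKim k (z ^ 2 / 2)) := by
  have hpow : z ^ ((1 : ℝ) / 2) * z⁻¹ = z ^ (-(1 : ℝ) / 2) := by
    rw [← rpow_neg_one, ← rpow_add hz]
    norm_num
  have hexp : exp (-(z ^ 2 / 2)) * exp (z ^ 2 / 2) = 1 := by
    rw [← exp_add, neg_add_cancel, exp_zero]
  rw [setIntegral_congr_fun measurableSet_Ioi fun w hw ↦ kernel_mul_rpow_mul hz hw _,
    integral_const_mul, integral_Ioi_exp_neg_mul_besselKim_div k hz, ← hpow, mul_inv]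
  linear_combination (z ^ ((1 : ℝ) / 2) * z⁻¹ * (π / cosh (π * k)) * besselKim k (z ^ 2 / 2)) * hexp
end

section
/- For real k and z > 0, the Mellin–Barnes representation z^{-1/2} K_{ik}(z²/2) = π^{-3/2} e^{-z²/2} z^{2ik - 1/2} (cosh(πk)/(2i)) ∫_{-i∞-0}^{+i∞-0} Γ(1/2 + ik + t) Γ(-t) Γ(-2ik - t) z^{2t} dt holds, where the contour runs to the left of the poles of Γ(-t) and Γ(-2ik - t). -/
open Complex Real MeasureTheory

/-!
Multiplying `K_ν(x) = ∫_0^∞ e^{-x cosh t} cosh(ν t) dt` by `e^x` turns it into a Laplace-type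
integral with exponent `-x (cosh t - 1)`. By Fubini its Mellin transform at `w` is
`Γ(w) ∫_0^∞ (cosh t - 1)^{-w} cosh(ν t) dt`. Since `cosh t - 1 = e^t (1 - e^{-t})² / 2`, the
substitution `u = e^{-t}` splits the remaining integral into the Beta integrals `B(w ± ν, 1 - 2w)`,
and the reflection and duplication formulas reduce the result to
`2^{-w} π^{-1/2} cos(πν) Γ(w + ν) Γ(w - ν) Γ(1/2 - w)`. This is integrable along vertical lines in
the strip `|Re ν| < Re w < 1/2`, so Mellin inversion applies; the contour integral is recovered by
setting `x = z² / 2` and `w = -ν - t`.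
-/

lemma hasMellin_exp_neg_mul {r : ℝ} (hr : 0 < r) {s : ℂ} (hs : 0 < s.re) :
    HasMellin (fun x ↦ (Real.exp (-(r * x)) : ℂ)) s ((r : ℂ) ^ (-s) * Complex.Gamma s) := by
  have hconv : MellinConvergent (fun x ↦ (Real.exp (-x) : ℂ)) s := by
    simpa only [MellinConvergent, smul_eq_mul, mul_comm] using Complex.GammaIntegral_convergent hs
  refine ⟨(MellinConvergent.comp_mul_left (f := fun x ↦ (Real.exp (-x) : ℂ)) hr).2 hconv, ?_⟩
  rw [mellin_comp_mul_left (fun x ↦ (Real.exp (-x) : ℂ)) s hr, smul_eq_mul,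
    Complex.Gamma_eq_integral hs, Complex.GammaIntegral_eq_mellin]

lemma verticalIntegrable_cpow_neg_smul {E : Type*} [NormedAddCommGroup E] [NormedSpace ℂ E]
    {r σ : ℝ} (hr : 0 < r) {f : ℂ → E} (hf : VerticalIntegrable f σ) :
    VerticalIntegrable (fun w ↦ (r : ℂ) ^ (-w) • f w) σ := by
  refine hf.bdd_smul (r ^ (-σ)) (Continuous.aestronglyMeasurable ?_) (.of_forall fun y ↦ ?_)
  · exact .const_cpow (by fun_prop) (.inl (ofReal_ne_zero.2 hr.ne'))
  · simp [norm_cpow_eq_rpow_re_of_pos hr]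

section LaplaceMellin

variable {α E : Type*} [MeasurableSpace α] [NormedAddCommGroup E] [NormedSpace ℂ E]
  {μ : Measure α} [SFinite μ] {φ : α → ℝ} {ψ : α → E} {s : ℂ}

lemma integral_norm_cpow_smul_exp_neg_mul_smul {r : ℝ} (hr : 0 < r) (hs : 0 < s.re) (v : E) :
    ∫ x in Set.Ioi (0 : ℝ), ‖(x : ℂ) ^ (s - 1) • (Real.exp (-(r * x)) : ℂ) • v‖ =
      Real.Gamma s.re * ‖(r : ℂ) ^ (-s) • v‖ := by
  have hnorm : ∀ x ∈ Set.Ioi (0 : ℝ), ‖(x : ℂ) ^ (s - 1) • (Real.exp (-(r * x)) : ℂ) • v‖ =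
      x ^ (s.re - 1) * Real.exp (-(r * x)) * ‖v‖ := fun x hx ↦ by
    rw [norm_smul, norm_smul, norm_cpow_eq_rpow_re_of_pos hx, norm_real,
      Real.norm_of_nonneg (Real.exp_nonneg _), sub_re, one_re, mul_assoc]
  rw [setIntegral_congr_fun measurableSet_Ioi hnorm, integral_mul_const,
    Real.integral_rpow_mul_exp_neg_mul_Ioi hs hr, norm_smul, norm_cpow_eq_rpow_re_of_pos hr,
    neg_re, Real.rpow_neg hr.le, one_div, Real.inv_rpow hr.le]
  ring

lemma integrable_prod_cpow_smul_exp_neg_mul_smul (hφ : AEMeasurable φ μ)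
    (hφ_pos : ∀ᵐ a ∂μ, 0 < φ a) (hψ : AEStronglyMeasurable ψ μ) (hs : 0 < s.re)
    (hint : Integrable (fun a ↦ (φ a : ℂ) ^ (-s) • ψ a) μ) :
    Integrable
      (fun p : ℝ × α ↦ (p.1 : ℂ) ^ (s - 1) • (Real.exp (-(φ p.2 * p.1)) : ℂ) • ψ p.2)
      ((volume.restrict (Set.Ioi 0)).prod μ) := by
  have hmeas : AEStronglyMeasurable
      (fun p : ℝ × α ↦ (p.1 : ℂ) ^ (s - 1) • (Real.exp (-(φ p.2 * p.1)) : ℂ) • ψ p.2)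
      ((volume.restrict (Set.Ioi 0)).prod μ) := by
    have : AEMeasurable (fun p : ℝ × α ↦ φ p.2) ((volume.restrict (Set.Ioi 0)).prod μ) :=
      hφ.comp_snd
    exact .smul (AEMeasurable.aestronglyMeasurable (by fun_prop)) (.smul (by fun_prop) hψ.comp_snd)
  refine (integrable_prod_iff' hmeas).2 ⟨?_, (hint.norm.const_mul (Real.Gamma s.re)).congr ?_⟩
  · filter_upwards [hφ_pos] with a ha
    simp_rw [← smul_assoc]
    exact Integrable.smul_const (hasMellin_exp_neg_mul ha hs).1 (ψ a)
  · filter_upwards [hφ_pos] with a ha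
    exact (integral_norm_cpow_smul_exp_neg_mul_smul ha hs (ψ a)).symm

theorem hasMellin_integral_exp_neg_mul_smul [CompleteSpace E] (hφ : AEMeasurable φ μ)
    (hφ_pos : ∀ᵐ a ∂μ, 0 < φ a) (hψ : AEStronglyMeasurable ψ μ) (hs : 0 < s.re)
    (hint : Integrable (fun a ↦ (φ a : ℂ) ^ (-s) • ψ a) μ) :
    HasMellin (fun x ↦ ∫ a, (Real.exp (-(φ a * x)) : ℂ) • ψ a ∂μ) s
      (Complex.Gamma s • ∫ a, (φ a : ℂ) ^ (-s) • ψ a ∂μ) := by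
  have hprod := integrable_prod_cpow_smul_exp_neg_mul_smul hφ hφ_pos hψ hs hint
  constructor
  · simpa only [MellinConvergent, IntegrableOn, integral_smul] using hprod.integral_prod_left
  · simp only [mellin, ← integral_smul]
    rw [integral_integral_swap hprod]
    refine integral_congr_ae ?_
    filter_upwards [hφ_pos] with a ha
    simp_rw [← smul_assoc]
    rw [integral_smul_const, smul_eq_mul, mul_comm]
    exact congrArg (· • ψ a) (hasMellin_exp_neg_mul ha hs).2

end LaplaceMellin

section ExpNegSubstitution

variable {E : Type*} [NormedAddCommGroup E] [NormedSpace ℝ E] (f : ℝ → E) (a : ℝ)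

lemma image_exp_neg_Ioi : (fun t ↦ Real.exp (-t)) '' Set.Ioi a = Set.Ioo 0 (Real.exp (-a)) := by
  rw [← Real.image_exp_Iio, ← Set.image_neg_Ioi, Set.image_image]

lemma hasDerivAt_exp_neg (t : ℝ) : HasDerivAt (fun t ↦ Real.exp (-t)) (-Real.exp (-t)) t := by
  simpa using (hasDerivAt_neg t).exp

lemma antitone_exp_neg : Antitone fun t : ℝ ↦ Real.exp (-t) :=
  fun _ _ h ↦ Real.exp_le_exp.2 (neg_le_neg h)

lemma integrableOn_comp_exp_neg_Ioi :
    IntegrableOn (fun t ↦ Real.exp (-t) • f (Real.exp (-t))) (Set.Ioi a) ↔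
      IntegrableOn f (Set.Ioo 0 (Real.exp (-a))) := by
  simpa [image_exp_neg_Ioi] using
    (integrableOn_image_iff_integrableOn_deriv_smul_of_antitoneOn measurableSet_Ioi
      (fun t _ ↦ (hasDerivAt_exp_neg t).hasDerivWithinAt) (antitone_exp_neg.antitoneOn _) f).symm

lemma integral_comp_exp_neg_Ioi :
    ∫ t in Set.Ioi a, Real.exp (-t) • f (Real.exp (-t)) =
      ∫ x in Set.Ioo 0 (Real.exp (-a)), f x := by
  simpa [image_exp_neg_Ioi] using
    (integral_image_eq_integral_deriv_smul_of_antitoneOn measurableSet_Ioi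
      (fun t _ ↦ (hasDerivAt_exp_neg t).hasDerivWithinAt) (antitone_exp_neg.antitoneOn _) f).symm

end ExpNegSubstitution

section Beta

variable {u v : ℂ}

lemma exp_neg_smul_betaIntegrand (u v : ℂ) (t : ℝ) :
    Real.exp (-t) • ((Real.exp (-t) : ℂ) ^ (u - 1) * (1 - (Real.exp (-t) : ℂ)) ^ (v - 1)) =
      Complex.exp (-(t * u)) * (1 - (Real.exp (-t) : ℂ)) ^ (v - 1) := by
  have hexp : (Real.exp (-t) : ℂ) ≠ 0 := ofReal_ne_zero.2 (Real.exp_ne_zero _)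
  rw [real_smul, ← mul_assoc, cpow_sub _ _ hexp, cpow_one, mul_div_cancel₀ _ hexp,
    cpow_def_of_ne_zero hexp, ← ofReal_log (Real.exp_nonneg _), Real.log_exp, ofReal_neg, neg_mul]

lemma integrableOn_exp_neg_mul_one_sub_exp_neg_cpow (hu : 0 < u.re) (hv : 0 < v.re) :
    IntegrableOn (fun t : ℝ ↦ Complex.exp (-(t * u)) * (1 - (Real.exp (-t) : ℂ)) ^ (v - 1))
      (Set.Ioi 0) := by
  have hbeta := (intervalIntegrable_iff_integrableOn_Ioo_of_le zero_le_one).1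
    (betaIntegral_convergent hu hv)
  simp_rw [← exp_neg_smul_betaIntegrand]
  exact (integrableOn_comp_exp_neg_Ioi
    (fun x : ℝ ↦ (x : ℂ) ^ (u - 1) * (1 - (x : ℂ)) ^ (v - 1)) 0).2 (by simpa using hbeta)

lemma integral_exp_neg_mul_one_sub_exp_neg_cpow (u v : ℂ) :
    ∫ t in Set.Ioi (0 : ℝ), Complex.exp (-(t * u)) * (1 - (Real.exp (-t) : ℂ)) ^ (v - 1) =
      betaIntegral u v := by
  simp_rw [← exp_neg_smul_betaIntegrand]
  rw [integral_comp_exp_neg_Ioi (fun x : ℝ ↦ (x : ℂ) ^ (u - 1) * (1 - (x : ℂ)) ^ (v - 1)),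
    neg_zero, Real.exp_zero, betaIntegral, intervalIntegral.integral_of_le zero_le_one,
    integral_Ioc_eq_integral_Ioo]

end Beta

section GammaEstimates

lemma norm_Gamma_le_Gamma_re {s : ℂ} (hs : 0 < s.re) : ‖Complex.Gamma s‖ ≤ Real.Gamma s.re := by
  rw [Complex.Gamma_eq_integral hs, Real.Gamma_eq_integral hs, Complex.GammaIntegral]
  refine (norm_integral_le_integral_norm _).trans_eq
    (setIntegral_congr_fun measurableSet_Ioi fun x hx ↦ ?_)
  rw [norm_mul, norm_cpow_eq_rpow_re_of_pos hx, norm_real, Real.norm_of_nonneg (Real.exp_nonneg _),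
    sub_re, one_re]

lemma norm_Gamma_le_div_norm_sq {s : ℂ} (hs : 0 < s.re) :
    ‖Complex.Gamma s‖ ≤ Real.Gamma (s.re + 2) / ‖s‖ ^ 2 := by
  have hs0 : s ≠ 0 := by rintro rfl; simp at hs
  have hs1 : s + 1 ≠ 0 := fun h ↦ by
    have hre : s.re + 1 = 0 := by simpa using congrArg re h
    linarith
  have hrec : Complex.Gamma (s + 2) = (s + 1) * (s * Complex.Gamma s) := by
    rw [← Complex.Gamma_add_one s hs0, ← Complex.Gamma_add_one _ hs1, add_assoc,
      one_add_one_eq_two]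
  have hle : ‖s‖ ≤ ‖s + 1‖ := by
    rw [← sq_le_sq₀ (norm_nonneg _) (norm_nonneg _), ← normSq_eq_norm_sq, ← normSq_eq_norm_sq,
      normSq_apply, normSq_apply, add_re, add_im, one_re, one_im]
    nlinarith
  rw [le_div_iff₀ (by positivity)]
  calc ‖Complex.Gamma s‖ * ‖s‖ ^ 2 = ‖s‖ * (‖s‖ * ‖Complex.Gamma s‖) := by ring
    _ ≤ ‖s + 1‖ * (‖s‖ * ‖Complex.Gamma s‖) := by gcongr
    _ = ‖Complex.Gamma (s + 2)‖ := by rw [hrec, norm_mul, norm_mul]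
    _ ≤ Real.Gamma (s.re + 2) := by
      simpa using norm_Gamma_le_Gamma_re (s := s + 2) (by simpa using add_pos hs two_pos)

lemma continuousOn_Gamma_re_pos : ContinuousOn Complex.Gamma {s | 0 < s.re} := fun s hs ↦
  (Complex.continuousAt_Gamma s fun m hm ↦ by
    have hneg : 0 < -(m : ℝ) := by simpa [hm] using hs
    linarith [m.cast_nonneg (α := ℝ)]).continuousWithinAt

lemma continuous_Gamma_comp {h : ℝ → ℂ} (hh : Continuous h) (hpos : ∀ y, 0 < (h y).re) :
    Continuous fun y ↦ Complex.Gamma (h y) :=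
  continuousOn_Gamma_re_pos.comp_continuous hh hpos

lemma verticalIntegrable_Gamma {σ : ℝ} (hσ : 0 < σ) : VerticalIntegrable Complex.Gamma σ := by
  have hmaj : Integrable fun y : ℝ ↦ Real.Gamma (σ + 2) / σ ^ 2 * (1 + (y / σ) ^ 2)⁻¹ :=
    (integrable_inv_one_add_sq.comp_div hσ.ne').const_mul _
  have hcont : Continuous fun y : ℝ ↦ Complex.Gamma (σ + y * I) :=
    continuous_Gamma_comp (by fun_prop) (by simpa using hσ)
  refine hmaj.mono' hcont.aestronglyMeasurable (.of_forall fun y ↦ ?_)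
  have hnorm : ‖(σ + y * I : ℂ)‖ ^ 2 = σ ^ 2 * (1 + (y / σ) ^ 2) := by
    rw [← normSq_eq_norm_sq, normSq_add_mul_I]
    field_simp
  calc ‖Complex.Gamma (σ + y * I)‖ ≤ Real.Gamma (σ + 2) / ‖(σ + y * I : ℂ)‖ ^ 2 := by
        simpa using norm_Gamma_le_div_norm_sq (s := σ + y * I) (by simpa using hσ)
    _ = Real.Gamma (σ + 2) / σ ^ 2 * (1 + (y / σ) ^ 2)⁻¹ := by
        rw [hnorm, ← div_div, div_eq_mul_inv _ (1 + _)]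

lemma integrable_Gamma_add_mul_I {a : ℂ} (ha : 0 < a.re) :
    Integrable fun y : ℝ ↦ Complex.Gamma (a + y * I) := by
  refine ((verticalIntegrable_Gamma ha).comp_add_right a.im).congr (.of_forall fun y ↦ ?_)
  dsimp only
  congr 1
  conv_rhs => rw [← re_add_im a]
  push_cast
  ring

end GammaEstimates

section GammaIdentities

variable {u v w s : ℂ}

lemma inv_Gamma_one_sub (hs : Complex.Gamma s ≠ 0) :
    (Complex.Gamma (1 - s))⁻¹ = Complex.Gamma s * Complex.sin (π * s) / π := by
  have hreflection := Complex.Gamma_mul_Gamma_one_sub s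
  rw [mul_comm] at hreflection
  rw [eq_div_of_mul_eq hs hreflection, inv_div, div_div_eq_mul_div]

lemma betaIntegral_one_sub_sub (hu : 0 < u.re) (hv : 0 < v.re) (huv : u.re + v.re < 1) :
    betaIntegral u (1 - u - v) =
      Complex.Gamma u * Complex.Gamma v * Complex.Gamma (1 - u - v) *
        (Complex.sin (π * v) / π) := by
  have hre : 0 < (1 - u - v).re := by rw [sub_re, sub_re, one_re]; linarith
  rw [betaIntegral_eq_Gamma_mul_div _ _ hu hre, div_eq_mul_inv,
    show u + (1 - u - v) = 1 - v by ring, inv_Gamma_one_sub (Complex.Gamma_ne_zero_of_re_pos hv)]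
  ring

lemma Gamma_mul_sin_mul_Gamma_one_sub_two_mul (hw : 0 < w.re) (hw' : w.re < 1) :
    Complex.Gamma w * Complex.sin (π * w) / π * Complex.Gamma (1 - 2 * w) =
      2 ^ (-2 * w) * Complex.Gamma (1 / 2 - w) / √π := by
  have hΓ : Complex.Gamma (1 - w) ≠ 0 := Complex.Gamma_ne_zero_of_re_pos (by simpa using hw')
  have hsqrt : ((√π : ℝ) : ℂ) ≠ 0 := ofReal_ne_zero.2 (Real.sqrt_pos.2 Real.pi_pos).ne'
  have hduplication := Complex.Gamma_mul_Gamma_add_half (1 / 2 - w)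
  rw [show 1 / 2 - w + 1 / 2 = 1 - w by ring, show 2 * (1 / 2 - w) = 1 - 2 * w by ring,
    show 1 - (1 - 2 * w) = 2 * w by ring] at hduplication
  rw [← inv_Gamma_one_sub (Complex.Gamma_ne_zero_of_re_pos hw), inv_mul_eq_div,
    div_eq_div_iff hΓ hsqrt, mul_assoc, hduplication, neg_mul, cpow_neg]
  field_simp

end GammaIdentities

section CoshIntegral

variable {ν w : ℂ}

lemma cosh_sub_one_pos {t : ℝ} (ht : 0 < t) : 0 < Real.cosh t - 1 :=
  sub_pos.2 (Real.one_lt_cosh.2 ht.ne')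

lemma cosh_sub_one_eq (t : ℝ) :
    Real.cosh t - 1 = 2⁻¹ * Real.exp t * (1 - Real.exp (-t)) ^ 2 := by
  have hexp : Real.exp t * Real.exp (-t) = 1 := by
    rw [← Real.exp_add, add_neg_cancel, Real.exp_zero]
  rw [Real.cosh_eq]
  linear_combination (1 - Real.exp (-t) / 2) * hexp

lemma cosh_sub_one_cpow_neg {t : ℝ} (ht : 0 < t) (w : ℂ) :
    ((Real.cosh t - 1 : ℝ) : ℂ) ^ (-w) =
      2 ^ w * Complex.exp (-(t * w)) * (1 - (Real.exp (-t) : ℂ)) ^ (-(2 * w)) := by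
  have hsub : 0 < 1 - Real.exp (-t) := sub_pos.2 (Real.exp_lt_one_iff.2 (neg_neg_of_pos ht))
  have hsub' : (1 - (Real.exp (-t) : ℂ)) ≠ 0 := by exact_mod_cast hsub.ne'
  have htwo : ((2⁻¹ : ℝ) : ℂ) ^ (-w) = 2 ^ w := by
    rw [ofReal_inv, ofReal_ofNat, inv_cpow _ _ (by simp [Real.pi_ne_zero.symm]), cpow_neg, inv_inv]
  have hexp : (Real.exp t : ℂ) ^ (-w) = Complex.exp (-(t * w)) := by
    rw [cpow_def_of_ne_zero (ofReal_ne_zero.2 (Real.exp_ne_zero t)),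
      ← ofReal_log (Real.exp_nonneg t), Real.log_exp, mul_neg]
  rw [cosh_sub_one_eq, sq, ofReal_mul, mul_cpow_ofReal_nonneg (by positivity) (by positivity),
    ofReal_mul, mul_cpow_ofReal_nonneg (by positivity) (by positivity), htwo, hexp,
    ofReal_mul, mul_cpow_ofReal_nonneg hsub.le hsub.le, ofReal_sub, ofReal_one,
    ← cpow_add _ _ hsub', two_mul, neg_add]

lemma cosh_sub_one_cpow_neg_mul_cosh {t : ℝ} (ht : 0 < t) (ν w : ℂ) :
    ((Real.cosh t - 1 : ℝ) : ℂ) ^ (-w) * Complex.cosh (ν * t) =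
      2 ^ w / 2 *
        (Complex.exp (-(t * (w + ν))) * (1 - (Real.exp (-t) : ℂ)) ^ (1 - 2 * w - 1) +
          Complex.exp (-(t * (w - ν))) * (1 - (Real.exp (-t) : ℂ)) ^ (1 - 2 * w - 1)) := by
  rw [cosh_sub_one_cpow_neg ht, Complex.cosh, show -(t * (w + ν)) = -(t * w) + -(ν * t) by ring,
    show -(t * (w - ν)) = -(t * w) + ν * t by ring, Complex.exp_add, Complex.exp_add,
    show 1 - 2 * w - 1 = -(2 * w) by ring]
  ring

lemma re_add_pos_of_abs_re_lt (hν : |ν.re| < w.re) : 0 < (w + ν).re := by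
  simpa using neg_lt_iff_pos_add'.1 (abs_lt.1 hν).1

lemma re_sub_pos_of_abs_re_lt (hν : |ν.re| < w.re) : 0 < (w - ν).re := by
  simpa using (abs_lt.1 hν).2

lemma integrableOn_cosh_sub_one_cpow_neg_mul_cosh (hν : |ν.re| < w.re) (hw : w.re < 1 / 2) :
    IntegrableOn (fun t : ℝ ↦ ((Real.cosh t - 1 : ℝ) : ℂ) ^ (-w) * Complex.cosh (ν * t))
      (Set.Ioi 0) := by
  have hone : 0 < (1 - 2 * w).re := by simpa using (lt_div_iff₀' two_pos).1 hw
  refine IntegrableOn.congr_fun (Integrable.const_mul (.add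
      (integrableOn_exp_neg_mul_one_sub_exp_neg_cpow (re_add_pos_of_abs_re_lt hν) hone)
      (integrableOn_exp_neg_mul_one_sub_exp_neg_cpow (re_sub_pos_of_abs_re_lt hν) hone))
    (2 ^ w / 2)) (fun t ht ↦ (cosh_sub_one_cpow_neg_mul_cosh ht ν w).symm) measurableSet_Ioi

lemma integral_cosh_sub_one_cpow_neg_mul_cosh (hν : |ν.re| < w.re) (hw : w.re < 1 / 2) :
    ∫ t in Set.Ioi (0 : ℝ), ((Real.cosh t - 1 : ℝ) : ℂ) ^ (-w) * Complex.cosh (ν * t) =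
      2 ^ w * (Complex.Gamma (w + ν) * Complex.Gamma (w - ν) * Complex.Gamma (1 - 2 * w)) *
        (Complex.sin (π * w) * Complex.cos (π * ν) / π) := by
  have hadd := re_add_pos_of_abs_re_lt hν
  have hsub := re_sub_pos_of_abs_re_lt hν
  have hone : 0 < (1 - 2 * w).re := by simpa using (lt_div_iff₀' two_pos).1 hw
  have hlt : (w - ν).re + (w + ν).re < 1 := by rw [sub_re, add_re]; linarith
  rw [setIntegral_congr_fun measurableSet_Ioi fun t ht ↦ cosh_sub_one_cpow_neg_mul_cosh ht ν w,
    integral_const_mul, integral_add (integrableOn_exp_neg_mul_one_sub_exp_neg_cpow hadd hone)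
      (integrableOn_exp_neg_mul_one_sub_exp_neg_cpow hsub hone),
    integral_exp_neg_mul_one_sub_exp_neg_cpow, integral_exp_neg_mul_one_sub_exp_neg_cpow]
  have hbeta_add := betaIntegral_one_sub_sub hadd hsub (by linarith)
  have hbeta_sub := betaIntegral_one_sub_sub hsub hadd hlt
  rw [show 1 - (w + ν) - (w - ν) = 1 - 2 * w by ring, mul_sub, Complex.sin_sub] at hbeta_add
  rw [show 1 - (w - ν) - (w + ν) = 1 - 2 * w by ring, mul_add, Complex.sin_add] at hbeta_sub
  rw [hbeta_add, hbeta_sub]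
  ring

end CoshIntegral

section BesselK

variable {ν w : ℂ} {x : ℝ}

/-- The modified Bessel function of the second kind `K_ν(x)`, of arbitrary complex order, defined
for `x > 0` by the integral `∫_0^∞ e^{-x cosh t} cosh(ν t) dt`. -/
noncomputable def besselK (ν : ℂ) (x : ℝ) : ℂ :=
  ∫ t in Set.Ioi (0 : ℝ), (Real.exp (-x * Real.cosh t) : ℂ) * Complex.cosh (ν * t)

lemma ofReal_besselKim (k x : ℝ) : (besselKim k x : ℂ) = besselK (I * k) x := by
  rw [besselKim, besselK, ← integral_complex_ofReal]
  congr 1 with t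
  rw [ofReal_mul, ofReal_cos, ← Complex.cosh_mul_I]
  push_cast
  ring_nf

lemma one_add_sq_div_two_le_cosh (t : ℝ) : 1 + t ^ 2 / 2 ≤ Real.cosh t := by
  have hsinh : (t / 2) ^ 2 ≤ Real.sinh (t / 2) ^ 2 := by
    rw [sq_le_sq, Real.abs_sinh]
    exact Real.self_le_sinh_iff.2 (abs_nonneg _)
  have hcosh := Real.cosh_two_mul (t / 2)
  rw [Real.cosh_sq, mul_div_cancel₀ t two_ne_zero] at hcosh
  linarith

lemma integrable_exp_neg_mul_cosh_mul_cosh (ν : ℂ) (hx : 0 < x) :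
    Integrable fun t : ℝ ↦ (Real.exp (-x * Real.cosh t) : ℂ) * Complex.cosh (ν * t) := by
  have hgauss : Integrable fun t : ℝ ↦
      (Real.exp (-(x / 2) * t ^ 2) : ℂ) * Complex.cosh (ν * t) := by
    have hre : 0 < ((x / 2 : ℝ) : ℂ).re := by rw [ofReal_re]; positivity
    refine (((integrable_cexp_quadratic hre ν 0).add
      (integrable_cexp_quadratic hre (-ν) 0)).div_const 2).congr (.of_forall fun t ↦ ?_)
    simp only [Pi.add_apply, Complex.cosh, add_zero, Complex.exp_add, ofReal_exp]
    push_cast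
    ring_nf
  refine hgauss.mono (Continuous.aestronglyMeasurable (by fun_prop)) (.of_forall fun t ↦ ?_)
  simp only [norm_mul, norm_real, Real.norm_eq_abs, Real.abs_exp]
  refine mul_le_mul_of_nonneg_right (Real.exp_le_exp.2 ?_) (norm_nonneg _)
  nlinarith [one_add_sq_div_two_le_cosh t]

lemma continuousAt_besselK (ν : ℂ) (hx : 0 < x) : ContinuousAt (besselK ν) x := by
  refine continuousAt_of_dominated
    (bound := fun t ↦ ‖(Real.exp (-(x / 2) * Real.cosh t) : ℂ) * Complex.cosh (ν * t)‖)
    (.of_forall fun y ↦ Continuous.aestronglyMeasurable (by fun_prop)) ?_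
    (integrable_exp_neg_mul_cosh_mul_cosh ν (half_pos hx)).integrableOn.norm
    (.of_forall fun t ↦ by fun_prop)
  filter_upwards [eventually_gt_nhds (half_lt_self hx)] with y hy
  refine .of_forall fun t ↦ ?_
  simp only [norm_mul, norm_real, Real.norm_eq_abs, Real.abs_exp]
  gcongr

lemma exp_mul_besselK (ν : ℂ) (x : ℝ) :
    (Real.exp x : ℂ) * besselK ν x =
      ∫ t in Set.Ioi (0 : ℝ),
        (Real.exp (-((Real.cosh t - 1) * x)) : ℂ) * Complex.cosh (ν * t) := by
  rw [besselK, ← integral_const_mul]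
  congr 1 with t
  rw [← mul_assoc, ← ofReal_mul, ← Real.exp_add]
  ring_nf

/-- The product of Gamma functions `Γ(w + ν) Γ(w - ν) Γ(1/2 - w)` that appears in the Mellin
transform of `x ↦ e^x K_ν(x)`, and hence in its Mellin–Barnes integral. -/
noncomputable def barnesKernel (ν w : ℂ) : ℂ :=
  Complex.Gamma (w + ν) * Complex.Gamma (w - ν) * Complex.Gamma (1 / 2 - w)

lemma Gamma_mul_integral_cosh_sub_one_cpow_neg_mul_cosh (hν : |ν.re| < w.re)
    (hw : w.re < 1 / 2) :
    Complex.Gamma w *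
        ∫ t in Set.Ioi (0 : ℝ), ((Real.cosh t - 1 : ℝ) : ℂ) ^ (-w) * Complex.cosh (ν * t) =
      Complex.cos (π * ν) / √π * (2 ^ (-w) * barnesKernel ν w) := by
  have hΓ := Gamma_mul_sin_mul_Gamma_one_sub_two_mul ((abs_nonneg _).trans_lt hν)
    (show w.re < 1 by linarith)
  have htwo : (2 : ℂ) ^ (-w) = 2 ^ w * 2 ^ (-2 * w) := by
    rw [← cpow_add _ _ two_ne_zero]
    ring_nf
  rw [integral_cosh_sub_one_cpow_neg_mul_cosh hν hw, barnesKernel, htwo]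
  linear_combination (2 ^ w * Complex.Gamma (w + ν) * Complex.Gamma (w - ν) *
    Complex.cos (π * ν)) * hΓ

theorem hasMellin_exp_mul_besselK (hν : |ν.re| < w.re) (hw : w.re < 1 / 2) :
    HasMellin (fun x ↦ (Real.exp x : ℂ) * besselK ν x) w
      (Complex.cos (π * ν) / √π * (2 ^ (-w) * barnesKernel ν w)) := by
  simp_rw [exp_mul_besselK, ← Gamma_mul_integral_cosh_sub_one_cpow_neg_mul_cosh hν hw]
  exact hasMellin_integral_exp_neg_mul_smul (φ := fun t ↦ Real.cosh t - 1) (by fun_prop)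
    (ae_restrict_of_forall_mem measurableSet_Ioi fun t ht ↦ cosh_sub_one_pos ht)
    (Continuous.aestronglyMeasurable (by fun_prop)) ((abs_nonneg _).trans_lt hν)
    (integrableOn_cosh_sub_one_cpow_neg_mul_cosh hν hw)

lemma verticalIntegrable_barnesKernel {σ : ℝ} (hν : |ν.re| < σ) (hσ : σ < 1 / 2) :
    VerticalIntegrable (barnesKernel ν) σ := by
  have hadd (y : ℝ) : 0 < (σ + y * I + ν).re := re_add_pos_of_abs_re_lt (by simpa using hν)
  have hsub (y : ℝ) : 0 < (σ + y * I - ν).re := re_sub_pos_of_abs_re_lt (by simpa using hν)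
  have hhalf (y : ℝ) : 0 < (1 / 2 - (σ + y * I) : ℂ).re := by simpa using hσ
  have hint : Integrable fun y : ℝ ↦ Complex.Gamma (σ + y * I + ν) := by
    simpa only [add_right_comm] using
      integrable_Gamma_add_mul_I (a := σ + ν) (by simpa using hadd 0)
  have hsub_cont : Continuous fun y : ℝ ↦ Complex.Gamma (σ + y * I - ν) :=
    continuous_Gamma_comp (by fun_prop) hsub
  have hhalf_cont : Continuous fun y : ℝ ↦ Complex.Gamma (1 / 2 - (σ + y * I)) :=
    continuous_Gamma_comp (by fun_prop) hhalf
  refine (hint.mul_bdd (c := Real.Gamma (σ - ν.re)) hsub_cont.aestronglyMeasurable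
    (.of_forall fun y ↦ ?_)).mul_bdd (c := Real.Gamma (1 / 2 - σ)) hhalf_cont.aestronglyMeasurable
    (.of_forall fun y ↦ ?_)
  · simpa using norm_Gamma_le_Gamma_re (hsub y)
  · simpa using norm_Gamma_le_Gamma_re (hhalf y)

/-- With `t = 1/2 - w` as the variable of integration, this is [DLMF, (10.32.14)]. -/
theorem exp_mul_besselK_eq_integral {σ : ℝ} (hx : 0 < x) (hν : |ν.re| < σ) (hσ : σ < 1 / 2) :
    (Real.exp x : ℂ) * besselK ν x =
      Complex.cos (π * ν) / (2 * π * √π) *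
        ∫ y : ℝ, ((2 * x : ℝ) : ℂ) ^ (-(σ + y * I)) * barnesKernel ν (σ + y * I) := by
  have hmellin (y : ℝ) : mellin (fun x ↦ (Real.exp x : ℂ) * besselK ν x) (σ + y * I) =
      Complex.cos (π * ν) / √π * (2 ^ (-(σ + y * I : ℂ)) * barnesKernel ν (σ + y * I)) :=
    (hasMellin_exp_mul_besselK (by simpa using hν) (by simpa using hσ)).2
  have hconv : MellinConvergent (fun x ↦ (Real.exp x : ℂ) * besselK ν x) σ :=
    (hasMellin_exp_mul_besselK (by simpa using hν) (by simpa using hσ)).1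
  have hvert : VerticalIntegrable (mellin fun x ↦ (Real.exp x : ℂ) * besselK ν x) σ := by
    simp_rw [VerticalIntegrable, hmellin]
    exact Integrable.const_mul
      (verticalIntegrable_cpow_neg_smul two_pos (verticalIntegrable_barnesKernel hν hσ)) _
  rw [← mellinInv_mellin_eq σ (fun x ↦ (Real.exp x : ℂ) * besselK ν x) hx hconv hvert
    (ContinuousAt.mul (by fun_prop) (continuousAt_besselK ν hx)), mellinInv, real_smul,
    ← integral_const_mul, ← integral_const_mul]
  congr 1 with y
  rw [hmellin, smul_eq_mul, ofReal_mul, mul_cpow_ofReal_nonneg zero_le_two hx.le]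
  push_cast
  field_simp

lemma cos_mul_I_mul_ofReal (x k : ℝ) :
    Complex.cos (x * (I * k)) = (Real.cosh (x * k) : ℂ) := by
  rw [← mul_assoc, mul_right_comm, Complex.cos_mul_I, ← ofReal_mul, ofReal_cosh]

lemma pi_cpow_neg_three_halves : (π : ℂ) ^ (-(3 / 2 : ℂ)) = (π * √π : ℂ)⁻¹ := by
  rw [cpow_neg, show (3 / 2 : ℂ) = 1 + (1 / 2 : ℝ) by push_cast; norm_num,
    cpow_add _ _ (ofReal_ne_zero.2 Real.pi_ne_zero), cpow_one, ← ofReal_cpow Real.pi_pos.le,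
    ← Real.sqrt_eq_rpow]

lemma ofReal_sq_cpow {z : ℝ} (hz : 0 < z) (w : ℂ) : ((z ^ 2 : ℝ) : ℂ) ^ w = (z : ℂ) ^ (2 * w) := by
  rw [sq, ofReal_mul, mul_cpow_ofReal_nonneg hz.le hz.le,
    ← cpow_add _ _ (ofReal_ne_zero.2 hz.ne'), two_mul]

lemma integral_sq_cpow_mul_barnesKernel {z : ℝ} (hz : 0 < z) (ν : ℂ) (eps : ℝ) :
    ∫ y : ℝ, ((z ^ 2 : ℝ) : ℂ) ^ (-((eps - ν.re : ℝ) + y * I : ℂ)) *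
        barnesKernel ν ((eps - ν.re : ℝ) + y * I) =
      (z : ℂ) ^ (2 * ν) * ∫ u : ℝ,
        Complex.Gamma (1 / 2 + ν + (-eps + I * u)) * Complex.Gamma (-(-eps + I * u)) *
          Complex.Gamma (-2 * ν - (-eps + I * u)) * (z : ℂ) ^ (2 * (-eps + I * u)) := by
  rw [← integral_sub_left_eq_self _ volume (-ν.im), ← integral_const_mul]
  congr 1 with u
  have hw : ((eps - ν.re : ℝ) + ((-ν.im - u : ℝ) : ℂ) * I : ℂ) = -ν - (-eps + I * u) := by
    conv_rhs => rw [← re_add_im ν]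
    push_cast
    ring
  rw [hw, ofReal_sq_cpow hz, barnesKernel, show 2 * -(-ν - (-eps + I * u)) =
    2 * ν + 2 * (-eps + I * u) by ring, cpow_add _ _ (ofReal_ne_zero.2 hz.ne')]
  ring_nf

/-- The contour `t = -eps + iu` separates the poles of `Γ(-t)` and `Γ(-2ν - t)` from those of
`Γ(1/2 + ν + t)`. -/
theorem besselK_mellin_barnes_general (ν : ℂ) (z eps : ℝ) (hz : 0 < z) (heps : 0 < eps)
    (hν : 2 * ν.re < eps) (hν' : eps < 1 / 2 + ν.re) :
    (z : ℂ) ^ (-(1 / 2 : ℂ)) * besselK ν (z ^ 2 / 2) =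
      (π : ℂ) ^ (-(3 / 2 : ℂ)) * Complex.exp (-(z : ℂ) ^ 2 / 2) *
        (z : ℂ) ^ (2 * ν - 1 / 2) * (Complex.cos (π * ν) / (2 * I)) *
          (I * ∫ u : ℝ,
            Complex.Gamma (1 / 2 + ν + (-eps + I * u)) * Complex.Gamma (-(-eps + I * u)) *
              Complex.Gamma (-2 * ν - (-eps + I * u)) * (z : ℂ) ^ (2 * (-eps + I * u))) := by
  have hσ : |ν.re| < eps - ν.re := abs_lt.2 ⟨by linarith, by linarith⟩
  have hrep := exp_mul_besselK_eq_integral (x := z ^ 2 / 2) (by positivity) hσ (by linarith)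
  have hK : besselK ν (z ^ 2 / 2) =
      Complex.exp (-(z : ℂ) ^ 2 / 2) * ((Real.exp (z ^ 2 / 2) : ℂ) * besselK ν (z ^ 2 / 2)) := by
    rw [← mul_assoc, ofReal_exp, ← Complex.exp_add]
    simp [neg_div]
  have hpow : (z : ℂ) ^ (2 * ν - 1 / 2) = (z : ℂ) ^ (2 * ν) * (z : ℂ) ^ (-(1 / 2 : ℂ)) := by
    rw [← cpow_add _ _ (ofReal_ne_zero.2 hz.ne'), sub_eq_add_neg]
  rw [mul_div_cancel₀ (z ^ 2) two_ne_zero, integral_sq_cpow_mul_barnesKernel hz] at hrep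
  rw [hK, hrep, hpow, pi_cpow_neg_three_halves]
  field_simp

end BesselK

/-- Mellin–Barnes representation of `z^{-1/2} K_{ik}(z²/2)`. The contour
from `-i∞ - 0` to `+i∞ - 0` is parametrised as `t = -ε + iu`, `u ∈ ℝ` (so `dt = i du`),
with `0 < ε < 1/2` so that it passes to the left of the poles of `Γ(-t)` and
`Γ(-2ik - t)` and to the right of those of `Γ(1/2 + ik + t)`. -/
theorem besselK_mellin_barnes (k z eps : ℝ) (hz : 0 < z)
    (heps : 0 < eps) (heps' : eps < 1 / 2) :
    ((z : ℂ) ^ (-(1 / 2 : ℂ)) * (besselKim k (z ^ 2 / 2) : ℂ))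
      = (Real.pi : ℂ) ^ (-(3 / 2 : ℂ)) * Complex.exp (-(z : ℂ) ^ 2 / 2) *
          (z : ℂ) ^ (2 * Complex.I * k - 1 / 2) *
          ((Real.cosh (Real.pi * k) : ℂ) / (2 * Complex.I)) *
          (Complex.I * ∫ u : ℝ,
            Complex.Gamma (1 / 2 + Complex.I * k + (-eps + Complex.I * u)) *
            Complex.Gamma (-(-eps + Complex.I * u)) *
            Complex.Gamma (-2 * Complex.I * k - (-eps + Complex.I * u)) *
            (z : ℂ) ^ (2 * (-eps + Complex.I * u))) := by
  simpa only [mul_assoc, ofReal_besselKim, cos_mul_I_mul_ofReal] using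
    besselK_mellin_barnes_general (I * k) z eps hz heps (by simpa) (by simpa using heps')
end
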